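/- arXiv:2211.13326 — 3 statements merged into one kernel-verified Lean document; each statement's English description precedes it below -/
import Mathlib

section
/- Every proper HNN extension Γ = (G, A, B, t) of a finitely generated group G (i.e. both associated subgroups A, B are proper subgroups of G) has infinite girth. -/
/-!
The group `G` is not the union of the proper subgroups `A` and `B`, so there is `c ∈ G` outside
both. By Britton's lemma an expression in `t` and elements of `G` is nontrivial as soon as it is
reduced and involves `t`. Two kinds of pieces never cause a reduction: `t ^ m * c ^ (±1) * t ^ n`
with `m, n ≠ 0` of arbitrary signs, and `t * s * t` with `s ∈ G` arbitrary.

Let `T` be a finite generating set of `G`. Put `C₀ = c` and `Cₛ = c * t * s * t * c` for `s ∈ T`, and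
choose distinct positive multiples `Nₖ` of `r`, one for each index `k`. The elements `t` and
`yₖ = t ^ Nₖ * Cₖ * t ^ Nₖ` generate the HNN extension: they give `c`, and then each `s`.

In a freely reduced word of length less than `r`, two consecutive occurrences `yₖ ^ ε` and `yₗ ^ δ`
are separated by some `t ^ j` with `|j| < r`, and the total exponent of `t` between their cores is
`ε Nₖ + j + δ Nₗ`. It is nonzero: if `k = l` and `δ = -ε` it equals `j`, and `j ≠ 0` by free
reducedness; otherwise `|ε Nₖ + δ Nₗ| ≥ r > |j|`. Hence the word spells a reduced expression which
involves `t`, and it is nontrivial (`lead_of_shape`, `exists_shape`).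
-/

/- `HasInfiniteGirth G`: for every `r` there is a finite generating set of `G`
admitting no nontrivial relation of length less than `r`, i.e. `girth G = ∞`. -/
open scoped Classical in
def HasInfiniteGirth (G : Type*) [Group G] : Prop :=
  ∀ r : ℕ, ∃ S : Finset G, Subgroup.closure (S : Set G) = ⊤ ∧
    ∀ w : FreeGroup {x // x ∈ S}, w ≠ 1 →
      FreeGroup.lift (fun s => (s : G)) w = 1 → r ≤ w.toWord.length

namespace HNNGirth

open HNNExtension HNNExtension.NormalWord

variable {G : Type*} [Group G] {A B : Subgroup G} (φ : A ≃* B)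

/-! ### Reduced expressions -/

/-- `g` is the product of a reduced word whose first letter is `t ^ u`. -/
def Begins (u : ℤˣ) (g : HNNExtension G A B φ) : Prop :=
  ∃ w : ReducedWord G A B, w.head = 1 ∧ w.toList.head?.map Prod.fst = some u ∧ w.prod φ = g

/-- `g` is the product of a reduced word whose first letter is `t` or `t⁻¹`. -/
def Lead (g : HNNExtension G A B φ) : Prop := ∃ u, Begins φ u g

/-- Neither `t` nor `t⁻¹` reduces against `X` when multiplied on the left. -/
def Start (X : HNNExtension G A B φ) : Prop := ∀ u : ℤˣ, Begins φ u (t ^ (u : ℤ) * X)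

/-- Left multiplication by `C` shields an element starting with `t ^ (±1)` from reduction. -/
def Core (C : HNNExtension G A B φ) : Prop := ∀ g, Lead φ g → Start φ (C * g)

variable {φ}

lemma Begins.cons {u v : ℤˣ} {g : HNNExtension G A B φ} (hg : Begins φ v g) (h : G)
    (hh : h ∈ toSubgroup A B u → u = v) : Begins φ u (t ^ (u : ℤ) * (of h * g)) := by
  obtain ⟨⟨hd, l, hc⟩, h1, h2, rfl⟩ := hg
  dsimp at h1 h2
  subst h1
  refine ⟨⟨1, (u, h) :: l, ?_⟩, rfl, by simp, ?_⟩
  · rw [List.isChain_cons]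
    refine ⟨fun y hy hm => ?_, hc⟩
    rw [Option.mem_def] at hy
    rw [hy] at h2
    simp at h2
    simpa [h2] using hh hm
  · simp [ReducedWord.prod, mul_assoc]

lemma start_one : Start φ (1 : HNNExtension G A B φ) := fun u =>
  ⟨⟨1, [(u, 1)], by simp⟩, rfl, by simp, by simp [ReducedWord.prod]⟩

/-- Britton's lemma, for words that start with `t ^ (±1)`. -/
lemma Lead.ne_one {g : HNNExtension G A B φ} (hg : Lead φ g) : g ≠ 1 := by
  rintro rfl
  obtain ⟨u, w, -, h2, h3⟩ := hg
  have := ReducedWord.toList_eq_nil_of_mem_of_range φ w (h3 ▸ one_mem _)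
  simp [this] at h2

lemma Begins.t_mul {u : ℤˣ} {g : HNNExtension G A B φ} (hg : Begins φ u g) :
    Begins φ u (t ^ (u : ℤ) * g) := by
  simpa using hg.cons (u := u) 1 (fun _ => rfl)

lemma Start.begins_pow {X : HNNExtension G A B φ} (hX : Start φ X) (u : ℤˣ) (n : ℕ) :
    Begins φ u ((t ^ (u : ℤ)) ^ (n + 1) * X) := by
  induction n with
  | zero => simpa using hX u
  | succ n ih =>
    rw [pow_succ', mul_assoc]
    exact ih.t_mul

lemma Start.lead {X : HNNExtension G A B φ} (hX : Start φ X) {m : ℤ} (hm : m ≠ 0) :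
    Lead φ (t ^ m * X) := by
  obtain ⟨n, rfl | rfl⟩ := m.eq_nat_or_neg <;> obtain ⟨n, rfl⟩ : ∃ k, n = k + 1 :=
    Nat.exists_eq_succ_of_ne_zero (by omega)
  · exact ⟨1, by simpa only [Units.val_one, zpow_one, zpow_natCast] using hX.begins_pow 1 n⟩
  · exact ⟨-1, by simpa only [Units.val_neg, Units.val_one, zpow_neg, zpow_one, inv_pow,
      zpow_natCast] using hX.begins_pow (-1) n⟩

lemma core_of {c : G} (hA : c ∉ A) (hB : c ∉ B) : Core φ (of c) := by
  rintro g ⟨v, hg⟩ u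
  refine hg.cons c fun h => ?_
  rcases Int.units_eq_one_or u with rfl | rfl
  · exact absurd h hA
  · exact absurd h hB

/-- Letters of equal sign on both sides protect an arbitrary element of `G`. -/
lemma core_sandwich {C : HNNExtension G A B φ} (hC : Core φ C) (u : ℤˣ) (s : G) :
    Core φ (C * t ^ (u : ℤ) * of s * t ^ (u : ℤ) * C) := by
  intro g hg
  have := hC _ ⟨u, (hC g hg u).cons (u := u) s (fun _ => rfl)⟩
  simpa only [mul_assoc] using this

/-! ### Short freely reduced words in the new generators -/

/-- The exponent `±1` of a letter of a word in a free group. -/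
def sgn (b : Bool) : ℤ := if b then 1 else -1

/-- The value of the letter `p`: the stable letter `t` for the index `none`, and
`t ^ N k * C k true * t ^ N k` for the index `some k`; here `C k false` stands for the
inverse of `C k true`. -/
def letter {κ : Type*} (N : κ → ℤ) (C : κ → Bool → HNNExtension G A B φ) :
    Option κ × Bool → HNNExtension G A B φ
  | (none, b) => t ^ sgn b
  | (some k, b) => t ^ (sgn b * N k) * C k b * t ^ (sgn b * N k)

/-- The shape of the value `g` of a word `L`: it starts with `t ^ j`, coming from the initial
letters `t ^ (±1)` of `L`, followed by nothing, or by the value of a first letter with index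
`some k`. If `j = 0`, that letter is the first one of `L`. -/
def Shape {κ : Type*} (N : κ → ℤ) (C : κ → Bool → HNNExtension G A B φ)
    (L : List (Option κ × Bool)) (j : ℤ) (g : HNNExtension G A B φ) : Prop :=
  |j| ≤ L.length ∧ (∀ b, L.head? = some (none, b) → 0 < sgn b * j) ∧
    ((∀ b, L.head? ≠ some (none, b)) → j = 0) ∧
    ((g = t ^ j ∧ (L = [] ∨ j ≠ 0)) ∨
      ∃ k b h, g = t ^ (j + sgn b * N k) * (C k b * h) ∧ Lead φ h ∧
        (j = 0 → L.head? = some (some k, b)))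

variable {κ : Type*} {N : κ → ℤ} {C : κ → Bool → HNNExtension G A B φ} {r : ℕ}

lemma lead_of_shape (hN : ∀ k, (r : ℤ) ≤ N k) (hC : ∀ k b, Core φ (C k b))
    {L : List (Option κ × Bool)} {j : ℤ} {g : HNNExtension G A B φ}
    (hL : L ≠ []) (hr : L.length < r) (h : Shape N C L j g) : Lead φ g := by
  obtain ⟨hj, -, -, ⟨rfl, h⟩ | ⟨k, b, h, rfl, hh, -⟩⟩ := h
  · simpa using start_one.lead (h.resolve_left hL)
  · refine (hC k b h hh).lead ?_
    have := hN k
    rw [abs_le] at hj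
    cases b <;> simp [sgn] <;> omega

/-- The exponent of `t` between the cores of two letters of a freely reduced short word is
nonzero. -/
lemma exponent_ne_zero (hN : ∀ k, (r : ℤ) ≤ N k)
    (hN' : ∀ k l, k ≠ l → (r : ℤ) ≤ |N k - N l|) (k l : κ) (a b : Bool) (j : ℤ)
    (hj : |j| < r) (h : j = 0 → k = l → a = b) :
    sgn a * N k + (j + sgn b * N l) ≠ 0 := by
  have h1 := hN k
  have h2 := hN l
  rw [abs_lt] at hj
  by_cases hkl : k = l
  · subst hkl
    cases a <;> cases b <;> simp [sgn] at h ⊢ <;> omega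
  · have h3 := hN' k l hkl
    rw [le_abs] at h3
    cases a <;> cases b <;> simp [sgn] at h ⊢ <;> omega

/-- Induction over the word, prepending one letter at a time. -/
lemma exists_shape (hN : ∀ k, (r : ℤ) ≤ N k)
    (hN' : ∀ k l, k ≠ l → (r : ℤ) ≤ |N k - N l|) (hC : ∀ k b, Core φ (C k b))
    (L : List (Option κ × Bool)) (hL : FreeGroup.IsReduced L) (hr : L.length < r) :
    ∃ j, Shape N C L j (L.map (letter N C)).prod := by
  induction L with
  | nil => exact ⟨0, by simp, by simp, by simp, Or.inl (by simp)⟩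
  | cons p L ih =>
    obtain ⟨hp, hL⟩ := List.isChain_cons.1 hL
    rw [List.length_cons] at hr
    obtain ⟨j, hj, hs, hz, hg⟩ := ih hL (by omega)
    obtain ⟨_ | k, a⟩ := p
    · -- The word starts with `t ^ sgn a`, which by reducedness does not cancel against `t ^ j`.
      have hnn : 0 ≤ sgn a * j := by
        by_cases hd : ∃ b, L.head? = some (none, b)
        · obtain ⟨b, hb⟩ := hd
          have hab : a = b := hp _ hb rfl
          exact hab ▸ (hs b hb).le
        · rw [hz (by simpa using hd)]
          simp
      have hne : sgn a + j ≠ 0 := by cases a <;> simp [sgn] at hnn ⊢ <;> omega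
      refine ⟨sgn a + j, ?_, ?_, ?_, ?_⟩
      · rw [abs_le] at hj ⊢
        cases a <;> simp [sgn] <;> omega
      · intro b hb
        have : a = b := by simpa using hb
        subst this
        cases a <;> simp [sgn] at hnn ⊢ <;> omega
      · intro h
        exact absurd rfl (h a)
      · rcases hg with ⟨hg, -⟩ | ⟨k, b, h, hg, hh, -⟩
        · refine Or.inl ⟨?_, Or.inr hne⟩
          rw [List.map_cons, List.prod_cons, hg, letter, zpow_add]
        · refine Or.inr ⟨k, b, h, ?_, hh, fun h => absurd h hne⟩
          rw [List.map_cons, List.prod_cons, hg, letter, add_assoc, zpow_add _ (sgn a)]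
          simp only [mul_assoc]
    · refine ⟨0, by simp; positivity, by simp, by simp, Or.inr ⟨k, a,
        t ^ (sgn a * N k) * (L.map (letter N C)).prod, ?_, ?_, by simp⟩⟩
      · simp [letter, mul_assoc]
      · have hjr : |j| < r := by omega
        rcases hg with ⟨hg, -⟩ | ⟨l, b, h, hg, hh, hz'⟩
        · rw [hg, ← zpow_add, ← mul_one (t ^ _)]
          refine start_one.lead ?_
          have := hN k
          rw [abs_lt] at hjr
          cases a <;> simp [sgn] <;> omega
        · rw [hg, ← mul_assoc, ← zpow_add]
          refine (hC l b h hh).lead (exponent_ne_zero hN hN' k l a b j hjr ?_)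
          rintro h0 rfl
          exact hp _ (hz' h0) rfl

/-! ### The generating set -/

lemma exists_notMem_of_ne_top (hA : A ≠ ⊤) (hB : B ≠ ⊤) : ∃ c : G, c ∉ A ∧ c ∉ B := by
  obtain ⟨a, ha⟩ : ∃ a, a ∉ A := by simpa [Subgroup.eq_top_iff'] using hA
  obtain ⟨b, hb⟩ : ∃ b, b ∉ B := by simpa [Subgroup.eq_top_iff'] using hB
  by_cases haB : a ∈ B
  · by_cases hbA : b ∈ A
    · exact ⟨a * b, by rwa [Subgroup.mul_mem_cancel_right _ hbA],
        by rwa [Subgroup.mul_mem_cancel_left _ haB]⟩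
    · exact ⟨b, hbA, hb⟩
  · exact ⟨a, ha, haB⟩

/-- The cores: `c` for the index `none`, and `c * t * s * t * c` for `some s`; the value at
`false` is the inverse. -/
def core {T : Finset G} (c : G) : Option T → Bool → HNNExtension G A B φ
  | none, true => of c
  | none, false => of c⁻¹
  | some s, true => of c * t ^ ((1 : ℤˣ) : ℤ) * of (s : G) * t ^ ((1 : ℤˣ) : ℤ) * of c
  | some s, false =>
    of c⁻¹ * t ^ ((-1 : ℤˣ) : ℤ) * of (s : G)⁻¹ * t ^ ((-1 : ℤˣ) : ℤ) * of c⁻¹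

lemma core_core {T : Finset G} {c : G} (hA : c ∉ A) (hB : c ∉ B) (k : Option T) (b : Bool) :
    Core φ (core c k b) := by
  have h1 : Core φ (of c) := core_of hA hB
  have h2 : Core φ (of c⁻¹) := core_of (by simpa using hA) (by simpa using hB)
  rcases k with _ | s <;> cases b
  · exact h2
  · exact h1
  · exact core_sandwich h2 (-1) _
  · exact core_sandwich h1 1 _

lemma letter_false {T : Finset G} (c : G) (N : Option T → ℤ) (k : Option (Option T)) :
    letter N (core (φ := φ) c) (k, false) = (letter N (core c) (k, true))⁻¹ := by
  rcases k with _ | _ | s <;> simp [letter, core, sgn, mul_assoc]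

lemma mem_of_zpow_mul_mul_zpow {H : Type*} [Group H] {K : Subgroup H} {x y : H} (hx : x ∈ K)
    (m : ℤ) (h : x ^ m * y * x ^ m ∈ K) : y ∈ K := by
  rwa [Subgroup.mul_mem_cancel_right _ (zpow_mem hx m),
    Subgroup.mul_mem_cancel_left _ (zpow_mem hx m)] at h

lemma closure_letters {T : Finset G} (hT : Subgroup.closure (T : Set G) = ⊤) (c : G)
    (N : Option T → ℤ) {S : Set (HNNExtension G A B φ)}
    (hS : ∀ k, letter N (core c) (k, true) ∈ S) : Subgroup.closure S = ⊤ := by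
  set K := Subgroup.closure S
  have hK : ∀ k, letter N (core c) (k, true) ∈ K := fun k => Subgroup.subset_closure (hS k)
  have ht : t ∈ K := by simpa [letter, sgn] using hK none
  have hcore : ∀ k, core c k true ∈ K := fun k => mem_of_zpow_mul_mul_zpow ht _ (hK (some k))
  have hc : of c ∈ K := hcore none
  have hs : ∀ s ∈ T, of s ∈ K := by
    intro s hs
    have h : of c * t ^ ((1 : ℤˣ) : ℤ) * of s * t ^ ((1 : ℤˣ) : ℤ) * of c ∈ K :=
      hcore (some ⟨s, hs⟩)
    rw [Subgroup.mul_mem_cancel_right _ hc, Subgroup.mul_mem_cancel_right _ (zpow_mem ht _),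
      Subgroup.mul_mem_cancel_left _ (mul_mem hc (zpow_mem ht _))] at h
    exact h
  have hof : ∀ g : G, of g ∈ K := by
    have : (⊤ : Subgroup G) ≤ K.comap of := by
      rw [← hT, Subgroup.closure_le]
      exact hs
    exact fun g => this (Subgroup.mem_top g)
  rw [Subgroup.eq_top_iff']
  intro x
  induction x using HNNExtension.induction_on with
  | of g => exact hof g
  | t => exact ht
  | mul x y hx hy => exact mul_mem hx hy
  | inv x hx => exact inv_mem hx

end HNNGirth

open HNNGirth in
/-- Every proper HNN extension of a finitely generated group has infinite girth. -/
theorem proper_hnn_hasInfiniteGirth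
    {G : Type*} [Group G] (hfg : Group.FG G)
    (A B : Subgroup G) (hA : A ≠ ⊤) (hB : B ≠ ⊤) (φ : A ≃* B) :
    HasInfiniteGirth (HNNExtension G A B φ) := by
  classical
  intro r
  obtain ⟨T, hT⟩ := hfg.out
  obtain ⟨c, hcA, hcB⟩ := exists_notMem_of_ne_top hA hB
  let e := Fintype.equivFin (Option T)
  let N : Option T → ℤ := fun k => ((e k : ℕ) + 1) * r
  have hN : ∀ k, (r : ℤ) ≤ N k := fun k => by
    have : (0 : ℤ) ≤ ((e k : ℕ) : ℤ) * r := by positivity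
    simp only [N]
    linarith
  have hN' : ∀ k l, k ≠ l → (r : ℤ) ≤ |N k - N l| := by
    intro k l hkl
    have hne : ((e k : ℕ) : ℤ) - (e l : ℕ) ≠ 0 := by
      rw [sub_ne_zero]
      exact_mod_cast fun h => hkl (e.injective (Fin.ext h))
    have heq : N k - N l = (((e k : ℕ) : ℤ) - (e l : ℕ)) * r := by simp only [N]; ring
    rw [heq, abs_mul, Nat.abs_cast]
    exact le_mul_of_one_le_left (by positivity) (Int.one_le_abs hne)
  let gen : Option (Option T) → HNNExtension G A B φ := fun k => letter N (core c) (k, true)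
  refine ⟨Finset.univ.image gen, closure_letters hT c N fun k => by simp [gen], ?_⟩
  intro w hw hw1
  by_contra! hlt
  -- Distinct generators have distinct indices, so reducedness survives the passage to indices.
  have hsec : ∀ s : {x // x ∈ Finset.univ.image gen}, ∃ k, gen k = s := fun s => by
    obtain ⟨k, -, hk⟩ := Finset.mem_image.1 s.2
    exact ⟨k, hk⟩
  choose σ hσ using hsec
  have hσi : Function.Injective σ := fun x y h => Subtype.ext (by rw [← hσ x, ← hσ y, h])
  let L := w.toWord.map (Prod.map σ id)
  have hL : FreeGroup.IsReduced L := by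
    refine (List.isChain_map _).2 (FreeGroup.isReduced_toWord.imp ?_)
    intro x y h hxy
    exact h (hσi hxy)
  have hLr : L.length < r := by simpa [L] using hlt
  have hL0 : L ≠ [] := by simpa [L] using hw
  -- In `HasInfiniteGirth` the word is first mapped to the free group on all elements.
  have hw2 : FreeGroup.lift (fun s : {x // x ∈ Finset.univ.image gen} =>
      (s : HNNExtension G A B φ)) w = 1 := by
    rw [← hw1]
    have : FreeGroup.lift (fun s : {x // x ∈ Finset.univ.image gen} =>
        (s : HNNExtension G A B φ)) =
        (FreeGroup.lift (fun s : HNNExtension G A B φ => s)).comp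
          (FreeGroup.lift fun s : {x // x ∈ Finset.univ.image gen} =>
            FreeGroup.of (s : HNNExtension G A B φ)) := by
      ext s
      simp
    exact DFunLike.congr_fun this w
  have hprod : (L.map (letter N (core (φ := φ) c))).prod = 1 := by
    rw [← hw2, ← FreeGroup.mk_toWord (x := w), FreeGroup.lift_mk]
    simp only [L, List.map_map]
    congr 1
    refine List.map_congr_left ?_
    rintro ⟨s, _ | _⟩ -
    · simp [letter_false, ← hσ, gen]
    · simp [← hσ, gen]
  obtain ⟨j, hj⟩ := exists_shape hN hN' (core_core hcA hcB) L hL hLr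
  exact (lead_of_shape hN (core_core hcA hcB) hL0 hLr hj).ne_one hprod
end

section
/- Let G = A *_C B be a proper amalgamated free product of finitely generated groups A and B over C with max{[A:C], [B:C]} ≥ 3. Then girth(G) = ∞. -/
/-! ### Reduced words in a dominant element and its twists -/

namespace AmalgamGirth

section Core

variable {G ι : Type*} [Group G]

/-- The generating family `γ`, `γ ^ nᵢ * gᵢ * γ ^ nᵢ` attached to a dominant element `γ` and
elements `gᵢ`; the index `none` stands for `γ` itself. -/
def twisted (γ : G) (g : ι → G) (n : ι → ℤ) : Option ι → G
  | none => γ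
  | some i => γ ^ n i * g i * γ ^ n i

/-- The sign carried by a letter of a word in a free group. -/
def sgn (ε : Bool) : ℤ := cond ε 1 (-1)

theorem cond_none (γ : G) (g : ι → G) (n : ι → ℤ) (ε : Bool) :
    cond ε (twisted γ g n none) (twisted γ g n none)⁻¹ = γ ^ sgn ε := by
  cases ε <;> simp [twisted, sgn]

theorem cond_some (γ : G) (g : ι → G) (n : ι → ℤ) (i : ι) (ε : Bool) :
    cond ε (twisted γ g n (some i)) (twisted γ g n (some i))⁻¹ =
      γ ^ (sgn ε * n i) * cond ε (g i) (g i)⁻¹ * γ ^ (sgn ε * n i) := by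
  cases ε <;> simp [twisted, sgn, mul_assoc]

/-- The exponent of `γ` between two consecutive twists never vanishes: the exponents `nᵢ` are large
and far apart compared with the run `γ ^ e` from the word, except for mutually inverse twists, where
the exponent is `e` itself. -/
theorem exponent_ne_zero {r : ℕ} {n : ι → ℤ} (hn : ∀ i, (r : ℤ) ≤ n i)
    (hsep : ∀ i j, i ≠ j → (r : ℤ) ≤ |n i - n j|) {e : ℤ} (he : |e| < r)
    (i j : ι) (ε δ : Bool) (h : e = 0 → i = j → ε = δ) :
    sgn δ * n j + (e + sgn ε * n i) ≠ 0 := by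
  have hi := hn i
  have hj := hn j
  rw [abs_lt] at he
  by_cases hij : i = j
  · subst hij
    cases ε <;> cases δ <;> simp [sgn] at h ⊢ <;> omega
  · have := hsep i j hij
    rw [le_abs] at this
    cases ε <;> cases δ <;> simp [sgn] <;> omega

/-- The first letter of a word whose leading power of `γ` has exponent `e`: the
word begins with `γ` when `e` is positive and with `γ⁻¹` when `e` is negative. -/
def HeadSpec (L : List (Option ι × Bool)) (e : ℤ) : Prop :=
  (0 < e → L.head? = some (none, true)) ∧ (e < 0 → L.head? = some (none, false))

theorem HeadSpec.cons_none {L : List (Option ι × Bool)} {e : ℤ} (h : HeadSpec L e) (ε : Bool)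
    (hL : FreeGroup.IsReduced ((none, ε) :: L)) :
    HeadSpec ((none, ε) :: L) (sgn ε + e) ∧ sgn ε + e ≠ 0 := by
  obtain ⟨h1, h2⟩ := h
  cases L with
  | nil =>
    simp at h1 h2
    obtain rfl : e = 0 := by omega
    cases ε <;> simp [HeadSpec, sgn]
  | cons a L =>
    rw [FreeGroup.isReduced_cons_cons] at hL
    have hL := hL.1
    obtain ⟨x, δ⟩ := a
    rcases lt_trichotomy e 0 with he | rfl | he
    · obtain ⟨rfl, rfl⟩ : x = none ∧ δ = false := by simpa using h2 he
      obtain rfl : ε = false := hL rfl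
      simp only [HeadSpec, sgn, List.head?_cons, cond_false]
      exact ⟨⟨fun h => by omega, fun _ => trivial⟩, by omega⟩
    · cases ε <;> simp [HeadSpec, sgn]
    · obtain ⟨rfl, rfl⟩ : x = none ∧ δ = true := by simpa using h1 he
      obtain rfl : ε = true := hL rfl
      simp only [HeadSpec, sgn, List.head?_cons, cond_true]
      exact ⟨⟨fun _ => trivial, fun h => by omega⟩, by omega⟩

theorem abs_sgn_add_le (ε : Bool) (e : ℤ) : |sgn ε + e| ≤ |e| + 1 := by
  have h : |sgn ε| = 1 := by cases ε <;> simp [sgn]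
  have := abs_add_le (sgn ε) e
  omega

/-- Shape of the value of a short reduced word in the twisted family: either a power of `γ`, or a
power of `γ` followed by an element of `T`. The predicate `T` should be read as "has a normal form
beginning with a letter that cannot interact with powers of `γ`". -/
theorem value_shape {γ : G} {g : ι → G} {n : ι → ℤ} {r : ℕ} (T : G → Prop)
    (hn : ∀ i, (r : ℤ) ≤ n i) (hsep : ∀ i j, i ≠ j → (r : ℤ) ≤ |n i - n j|)
    (hT1 : ∀ i (ε : Bool) (m : ℤ), m ≠ 0 → T (cond ε (g i) (g i)⁻¹ * γ ^ m))
    (hT2 : ∀ i (ε : Bool) (m : ℤ) h, m ≠ 0 → T h → T (cond ε (g i) (g i)⁻¹ * (γ ^ m * h)))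
    (L : List (Option ι × Bool)) (hL : FreeGroup.IsReduced L) (hlen : L.length < r) :
    ∃ e : ℤ, |e| ≤ L.length ∧ HeadSpec L e ∧
      (((L.map fun x => cond x.2 (twisted γ g n x.1) (twisted γ g n x.1)⁻¹).prod = γ ^ e ∧
          (e = 0 → L = [])) ∨
        ∃ i ε h, T h ∧
          (L.map fun x => cond x.2 (twisted γ g n x.1) (twisted γ g n x.1)⁻¹).prod =
            γ ^ (e + sgn ε * n i) * h ∧ (e = 0 → L.head? = some (some i, ε))) := by
  induction L with
  | nil => exact ⟨0, by simp [HeadSpec]⟩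
  | cons a L ih =>
    have hL' : FreeGroup.IsReduced L := hL.tail
    rw [List.length_cons] at hlen
    obtain ⟨e, he, hhead, hval⟩ := ih hL' (by omega)
    obtain ⟨_ | j, δ⟩ := a
    · obtain ⟨hhead', hne⟩ := hhead.cons_none δ hL
      refine ⟨sgn δ + e, ?_, hhead', ?_⟩
      · have := abs_sgn_add_le δ e
        push_cast [List.length_cons]
        omega
      · simp only [List.map_cons, List.prod_cons, cond_none]
        rcases hval with ⟨hv, -⟩ | ⟨i, ε, h, hT, hv, -⟩
        · exact Or.inl ⟨by rw [hv, zpow_add], fun h => absurd h hne⟩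
        · exact Or.inr ⟨i, ε, h, hT, by rw [hv, add_assoc, zpow_add γ (sgn δ), mul_assoc],
            fun h => absurd h hne⟩
    · refine ⟨0, by simp; omega, by simp [HeadSpec], Or.inr ?_⟩
      simp only [List.map_cons, List.prod_cons, cond_some]
      have he' : |e| < r := by omega
      rcases hval with ⟨hv, -⟩ | ⟨i, ε, h, hT, hv, h0⟩
      · refine ⟨j, δ, _, hT1 j δ (sgn δ * n j + e) ?_, ?_, by simp⟩
        · have := hn j
          rw [abs_lt] at he'
          cases δ <;> simp [sgn] <;> omega
        · rw [hv, zero_add, zpow_add γ (sgn δ * n j)]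
          simp only [mul_assoc]
      · refine ⟨j, δ, _, hT2 j δ (sgn δ * n j + (e + sgn ε * n i)) h ?_ hT, ?_, by simp⟩
        · refine exponent_ne_zero hn hsep he' i j ε δ fun hz hij => ?_
          subst hij
          cases L with
          | nil => simp at h0; omega
          | cons b L =>
            have hb : b = (some i, ε) := by simpa using h0 hz
            rw [hb, FreeGroup.isReduced_cons_cons] at hL
            exact (hL.1 rfl).symm
        · rw [hv, zero_add, zpow_add γ (sgn δ * n j)]
          simp only [mul_assoc]

theorem prod_ne_one {γ : G} {g : ι → G} {n : ι → ℤ} {r : ℕ} (T : G → Prop)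
    (hn : ∀ i, (r : ℤ) ≤ n i) (hsep : ∀ i j, i ≠ j → (r : ℤ) ≤ |n i - n j|)
    (hT1 : ∀ i (ε : Bool) (m : ℤ), m ≠ 0 → T (cond ε (g i) (g i)⁻¹ * γ ^ m))
    (hT2 : ∀ i (ε : Bool) (m : ℤ) h, m ≠ 0 → T h → T (cond ε (g i) (g i)⁻¹ * (γ ^ m * h)))
    (hγ : ∀ m : ℤ, m ≠ 0 → γ ^ m ≠ 1) (hT : ∀ (m : ℤ) h, T h → γ ^ m * h ≠ 1)
    (L : List (Option ι × Bool)) (hL : FreeGroup.IsReduced L) (hlen : L.length < r)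
    (hne : L ≠ []) :
    (L.map fun x => cond x.2 (twisted γ g n x.1) (twisted γ g n x.1)⁻¹).prod ≠ 1 := by
  obtain ⟨e, -, -, ⟨hv, h0⟩ | ⟨i, ε, h, hh, hv, -⟩⟩ := value_shape T hn hsep hT1 hT2 L hL hlen
  · rw [hv]
    exact hγ e fun h => hne (h0 h)
  · rw [hv]
    exact hT _ h hh

/-- Passing from the indexed twisted family to the finite subset of `G` it spans. A word over the
subset is rewritten over the index type along a section of the family; sections are injective, so
reduced words stay reduced, and no injectivity of the family itself is needed. -/
theorem exists_generators [Finite ι] {γ : G} {g : ι → G}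
    (hgen : Subgroup.closure (insert γ (Set.range g)) = ⊤) (T : G → Prop)
    (hT1 : ∀ i (ε : Bool) (m : ℤ), m ≠ 0 → T (cond ε (g i) (g i)⁻¹ * γ ^ m))
    (hT2 : ∀ i (ε : Bool) (m : ℤ) h, m ≠ 0 → T h → T (cond ε (g i) (g i)⁻¹ * (γ ^ m * h)))
    (hγ : ∀ m : ℤ, m ≠ 0 → γ ^ m ≠ 1) (hT : ∀ (m : ℤ) h, T h → γ ^ m * h ≠ 1) :
    HasInfiniteGirth G := by
  classical
  intro r
  obtain ⟨N, ⟨φ⟩⟩ := Finite.exists_equiv_fin ι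
  let n : ι → ℤ := fun i => r * ((φ i : ℕ) + 1)
  have hn : ∀ i, (r : ℤ) ≤ n i := fun i => by
    have : (0 : ℤ) ≤ r * (φ i : ℕ) := by positivity
    simp only [n]
    linarith
  have hsep : ∀ i j, i ≠ j → (r : ℤ) ≤ |n i - n j| := fun i j hij => by
    have h1 : n i - n j = r * ((φ i : ℕ) - (φ j : ℕ) : ℤ) := by simp only [n]; ring
    have h2 : ((φ i : ℕ) - (φ j : ℕ) : ℤ) ≠ 0 := by
      rw [sub_ne_zero]
      exact_mod_cast fun h => hij (φ.injective (Fin.ext h))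
    rw [h1, abs_mul, Nat.abs_cast]
    exact le_mul_of_one_le_right (by positivity) (Int.one_le_abs h2)
  refine ⟨(Set.finite_range (twisted γ g n)).toFinset, ?_, ?_⟩
  · rw [Set.Finite.coe_toFinset, eq_top_iff, ← hgen, Subgroup.closure_le]
    have hmem : ∀ x, twisted γ g n x ∈ Subgroup.closure (Set.range (twisted γ g n)) :=
      fun x => Subgroup.subset_closure ⟨x, rfl⟩
    have hγm : γ ∈ Subgroup.closure (Set.range (twisted γ g n)) := hmem none
    rintro x (rfl | ⟨i, rfl⟩)
    · exact hγm
    · have h : g i = (γ ^ n i)⁻¹ * twisted γ g n (some i) * (γ ^ n i)⁻¹ := by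
        simp only [twisted]
        group
      rw [h]
      have hp := Subgroup.inv_mem _ (Subgroup.zpow_mem _ hγm (n i))
      exact Subgroup.mul_mem _ (Subgroup.mul_mem _ hp (hmem _)) hp
  · intro w hw hw1
    by_contra! hlen
    have hsec : ∀ s : {x // x ∈ (Set.finite_range (twisted γ g n)).toFinset},
        ∃ x, twisted γ g n x = s := fun s =>
      Set.mem_range.1 ((Set.finite_range (twisted γ g n)).mem_toFinset.1 s.2)
    choose p hp using hsec
    have hpinj : Function.Injective p := fun s t h => Subtype.ext (by rw [← hp, ← hp, h])
    refine prod_ne_one (γ := γ) (g := g) (n := n) T hn hsep hT1 hT2 hγ hT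
      (w.toWord.map (Prod.map p id)) ?_ (by simpa using hlen) (by simpa using hw) ?_
    · have hred := FreeGroup.isReduced_toWord (x := w)
      unfold FreeGroup.IsReduced at hred ⊢
      rw [List.isChain_map]
      exact hred.imp fun a b h hab => h (hpinj hab)
    · -- In `HasInfiniteGirth` the word `w` is coerced to a word in `FreeGroup G` through the monad
      -- structure of `FreeGroup` and then evaluated; this is evaluation of `w` along the inclusion.
      have hcoe : ∀ v : FreeGroup {x // x ∈ (Set.finite_range (twisted γ g n)).toFinset},
          FreeGroup.lift (fun s : G => s) (v >>= fun a => pure a.1) =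
            FreeGroup.lift Subtype.val v := fun v => by
        change FreeGroup.lift (fun s : G => s)
          (FreeGroup.lift (fun a => FreeGroup.of a.1) v) = FreeGroup.lift Subtype.val v
        induction v using FreeGroup.induction_on <;> simp_all
      have hw1 := (hcoe w).symm.trans hw1
      rw [← FreeGroup.mk_toWord (x := w), FreeGroup.lift_mk] at hw1
      rw [List.map_map, ← hw1]
      congr 1
      refine List.map_congr_left fun x _ => ?_
      simp [hp]

end Core

/-! ### Alternating products in the amalgam -/

section Alternating

open Monoid

variable {C : Type*} [Group C] {Gf : Bool → Type*} [∀ b, Group (Gf b)]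

/-- `Alt φ i j x`: the element `x` of the amalgam is an alternating product of letters outside the
amalgamated subgroup, the first letter lying in the factor `i` and the last one in the factor `j`. -/
inductive Alt (φ : ∀ b, C →* Gf b) : Bool → Bool → PushoutI φ → Prop
  | of {b : Bool} {x : Gf b} (hx : x ∉ (φ b).range) : Alt φ b b (PushoutI.of b x)
  | mul {i j k l : Bool} {x y : PushoutI φ} (hx : Alt φ i j x) (hjk : j ≠ k)
      (hy : Alt φ k l y) : Alt φ i l (x * y)

variable {φ : ∀ b, C →* Gf b}

theorem Alt.inv {i j : Bool} {x : PushoutI φ} (h : Alt φ i j x) : Alt φ j i x⁻¹ := by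
  induction h with
  | of hx =>
    rw [← map_inv]
    exact .of fun h => hx ((Subgroup.inv_mem_iff _).1 h)
  | mul _ hjk _ ihx ihy =>
    rw [mul_inv_rev]
    exact .mul ihy hjk.symm ihx

theorem Alt.exists_neWord {i j : Bool} {x : PushoutI φ} (h : Alt φ i j x) :
    ∃ w : CoprodI.NeWord Gf i j, PushoutI.Reduced φ w.toWord ∧
      PushoutI.ofCoprodI w.prod = x := by
  induction h with
  | @of b x hx =>
    refine ⟨.singleton x fun h => hx (h ▸ Subgroup.one_mem _), ?_, by simp⟩
    intro g hg
    obtain rfl : g = ⟨b, x⟩ := by simpa [CoprodI.NeWord.toWord] using hg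
    exact hx
  | mul _ hjk _ ihx ihy =>
    obtain ⟨v, hv, rfl⟩ := ihx
    obtain ⟨w, hw, rfl⟩ := ihy
    refine ⟨.append v hjk w, ?_, by simp⟩
    intro g hg
    rcases List.mem_append.1 (show g ∈ v.toList ++ w.toList from hg) with h | h
    · exact hv g h
    · exact hw g h

/-- The normal form theorem: alternating products are nontrivial. -/
theorem Alt.ne_one (hinj : ∀ b, Function.Injective (φ b)) {i j : Bool} {x : PushoutI φ}
    (h : Alt φ i j x) : x ≠ 1 := by
  rintro rfl
  obtain ⟨w, hw, hw1⟩ := h.exists_neWord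
  have := hw.eq_empty_of_mem_range hinj (by
    change PushoutI.ofCoprodI w.prod ∈ _
    rw [hw1]
    exact Subgroup.one_mem _)
  exact w.toList_ne_nil (congrArg CoprodI.Word.toList this)

/-- All nonzero powers of `a₁ * d * a₂`, with `a₁, a₂, a₂ * a₁` outside the amalgamated subgroup,
begin and end with a letter of the factor of `a₁` and `a₂`: between two periods the letters `a₂` and
`a₁` merge to the single letter `a₂ * a₁`. -/
theorem Alt.zpow {b : Bool} {a₁ a₂ : Gf b} {d : Gf !b} (h₁ : a₁ ∉ (φ b).range)
    (h₂ : a₂ ∉ (φ b).range) (h₂₁ : a₂ * a₁ ∉ (φ b).range) (hd : d ∉ (φ !b).range)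
    (m : ℤ) (hm : m ≠ 0) :
    Alt φ b b ((PushoutI.of b a₁ * PushoutI.of (!b) d * PushoutI.of b a₂) ^ m) := by
  have hb : b ≠ !b := by simp
  have hpre : ∀ k : ℕ, Alt φ b (!b)
      ((PushoutI.of b a₁ * PushoutI.of (!b) d * PushoutI.of b a₂) ^ k *
        (PushoutI.of b a₁ * PushoutI.of (!b) d)) := by
    intro k
    induction k with
    | zero =>
      rw [pow_zero, one_mul]
      exact .mul (.of h₁) hb (.of hd)
    | succ k ih =>
      have := Alt.mul (Alt.mul ih hb.symm (Alt.of h₂₁)) hb (Alt.of hd)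
      rw [map_mul] at this
      simpa only [pow_succ, mul_assoc] using this
  have hpos : ∀ k : ℕ, Alt φ b b
      ((PushoutI.of b a₁ * PushoutI.of (!b) d * PushoutI.of b a₂) ^ (k + 1)) := by
    intro k
    have := Alt.mul (hpre k) hb.symm (Alt.of h₂)
    simpa only [pow_succ, mul_assoc] using this
  obtain ⟨k, rfl | rfl⟩ := m.eq_nat_or_neg
  · obtain ⟨l, rfl⟩ := Nat.exists_eq_succ_of_ne_zero (show k ≠ 0 by simpa using hm)
    rw [zpow_natCast]
    exact hpos l
  · obtain ⟨l, rfl⟩ := Nat.exists_eq_succ_of_ne_zero (show k ≠ 0 by simpa using hm)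
    rw [zpow_neg, zpow_natCast]
    exact (hpos l).inv

end Alternating

/-! ### Group-theoretic preliminaries -/

/-- A finitely generated group is generated by finitely many elements outside a given proper
subgroup. -/
theorem exists_finset_notMem {A : Type*} [Group A] (hA : Group.FG A) {H : Subgroup A}
    (hH : H ≠ ⊤) :
    ∃ S : Finset A, S.Nonempty ∧ (∀ s ∈ S, s ∉ H) ∧ Subgroup.closure (S : Set A) = ⊤ := by
  classical
  obtain ⟨a, ha⟩ : ∃ a, a ∉ H := by
    by_contra! h
    exact hH (eq_top_iff.2 fun x _ => h x)
  obtain ⟨S, hS⟩ := hA.out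
  -- Generators inside `H` are moved out of `H` by right multiplication with `a`.
  refine ⟨insert a (S.image fun s => if s ∈ H then s * a else s), by simp, ?_, ?_⟩
  · intro s hs
    rw [Finset.mem_insert, Finset.mem_image] at hs
    rcases hs with rfl | ⟨t, -, rfl⟩
    · exact ha
    · split_ifs with h
      · rwa [Subgroup.mul_mem_cancel_left _ h]
      · exact h
  · rw [eq_top_iff, ← hS, Subgroup.closure_le]
    intro s hs
    have key : ∀ x ∈ insert a (S.image fun s => if s ∈ H then s * a else s),
        x ∈ Subgroup.closure
          ((insert a (S.image fun s => if s ∈ H then s * a else s) : Finset A) : Set A) :=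
      fun x hx => Subgroup.subset_closure hx
    have h1 := key a (Finset.mem_insert_self _ _)
    have h2 := key _ (Finset.mem_insert_of_mem (Finset.mem_image_of_mem _ hs))
    split_ifs at h2 with h
    · exact (Subgroup.mul_mem_cancel_right _ h1).1 h2
    · exact h2

theorem exists_mul_notMem {A : Type*} [Group A] {H : Subgroup A} (hH : H ≠ ⊤)
    (hidx : H.index = 0 ∨ 3 ≤ H.index) : ∃ x y, x ∉ H ∧ y ∉ H ∧ y * x ∉ H := by
  by_contra! h
  obtain ⟨a, ha⟩ : ∃ a, a ∉ H := by
    by_contra! h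
    exact hH (eq_top_iff.2 fun x _ => h x)
  have : H.index = 2 := Subgroup.index_eq_two_iff_exists_notMem_and.2
    ⟨a, ha, fun b => or_iff_not_imp_right.2 fun hb => h a b ha hb⟩
  omega

end AmalgamGirth

open AmalgamGirth

/-- A proper amalgamated free product `A *_C B` of finitely generated groups
(`C` embedded properly in both factors) with `max{[A:C],[B:C]} ≥ 3` has infinite
girth. Here the amalgam is realized as the pushout of the family of
monomorphisms `φ b : C →* Gf b` indexed by `Bool`. -/
theorem proper_amalgam_hasInfiniteGirth
    {C : Type*} [Group C] {Gf : Bool → Type*} [∀ b, Group (Gf b)]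
    (φ : ∀ b, C →* Gf b)
    (hinj : ∀ b, Function.Injective (φ b))
    (hfg : ∀ b, Group.FG (Gf b))
    (hproper : ∀ b, (φ b).range ≠ ⊤)
    (hindex : ∃ b, (φ b).range.index = 0 ∨ 3 ≤ (φ b).range.index) :
    HasInfiniteGirth (Monoid.PushoutI φ) := by
  obtain ⟨b, hb⟩ := hindex
  have hbn : (!b) ≠ b := by simp
  obtain ⟨a₁, a₂, h₁, h₂, h₂₁⟩ := exists_mul_notMem (hproper b) hb
  obtain ⟨SA, -, hSA, hSAgen⟩ := exists_finset_notMem (hfg b) (hproper b)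
  obtain ⟨SB, ⟨d, hdS⟩, hSB, hSBgen⟩ := exists_finset_notMem (hfg !b) (hproper !b)
  have hd := hSB d hdS
  have hpow := Alt.zpow h₁ h₂ h₂₁ hd
  set γ : Monoid.PushoutI φ :=
    Monoid.PushoutI.of b a₁ * Monoid.PushoutI.of (!b) d * Monoid.PushoutI.of b a₂ with hγ
  -- Generators of the factor `b` are enclosed in letters `d`, so that every `g i` begins and ends
  -- in the factor `!b`, whereas powers of `γ` begin and end in the factor `b`.
  let g : {x // x ∈ SA} ⊕ {x // x ∈ SB} → Monoid.PushoutI φ := Sum.elim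
    (fun s => Monoid.PushoutI.of (!b) d * Monoid.PushoutI.of b s.1 * Monoid.PushoutI.of (!b) d)
    (fun s => Monoid.PushoutI.of (!b) s.1)
  have hg : ∀ i, Alt φ (!b) (!b) (g i) := by
    rintro (s | s)
    · exact .mul (.mul (.of hd) hbn (.of (hSA _ s.2))) hbn.symm (.of hd)
    · exact .of (hSB _ s.2)
  have hgε : ∀ i (ε : Bool), Alt φ (!b) (!b) (cond ε (g i) (g i)⁻¹) := by
    rintro i (_ | _)
    · exact (hg i).inv
    · exact hg i
  refine exists_generators (γ := γ) (g := g) ?_ (fun h => ∃ k, Alt φ (!b) k h) ?_ ?_ ?_ ?_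
  · set K := Subgroup.closure (insert γ (Set.range g)) with hK
    have hgK : ∀ i, g i ∈ K := fun i => Subgroup.subset_closure (Or.inr ⟨i, rfl⟩)
    have hdK : Monoid.PushoutI.of (!b) d ∈ K := hgK (Sum.inr ⟨d, hdS⟩)
    have hA : ∀ x : Gf b, Monoid.PushoutI.of b x ∈ K := by
      have : (⊤ : Subgroup (Gf b)) ≤ K.comap (Monoid.PushoutI.of b) := by
        rw [← hSAgen, Subgroup.closure_le]
        intro s hs
        have := hgK (Sum.inl ⟨s, hs⟩)
        exact (Subgroup.mul_mem_cancel_left K hdK).1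
          ((Subgroup.mul_mem_cancel_right K hdK).1 this)
      exact fun x => this (Subgroup.mem_top x)
    have hB : ∀ x : Gf !b, Monoid.PushoutI.of (!b) x ∈ K := by
      have : (⊤ : Subgroup (Gf !b)) ≤ K.comap (Monoid.PushoutI.of (!b)) := by
        rw [← hSBgen, Subgroup.closure_le]
        intro s hs
        exact hgK (Sum.inr ⟨s, hs⟩)
      exact fun x => this (Subgroup.mem_top x)
    refine eq_top_iff.2 fun x _ => ?_
    induction x using Monoid.PushoutI.induction_on with
    | of i y =>
      by_cases hi : i = b
      · subst hi
        exact hA y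
      · obtain rfl : i = !b := Bool.eq_not.2 hi
        exact hB y
    | base c =>
      rw [← Monoid.PushoutI.of_apply_eq_base φ b]
      exact hA _
    | mul x y hx hy => exact K.mul_mem (hx trivial) (hy trivial)
  · exact fun i ε m hm => ⟨b, .mul (hgε i ε) hbn (hpow m hm)⟩
  · rintro i ε m h hm ⟨k, hk⟩
    exact ⟨k, .mul (hgε i ε) hbn (.mul (hpow m hm) hbn.symm hk)⟩
  · exact fun m hm => (hpow m hm).ne_one hinj
  · rintro m h ⟨k, hk⟩
    rcases eq_or_ne m 0 with rfl | hm
    · rw [zpow_zero, one_mul]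
      exact hk.ne_one hinj
    · exact (Alt.mul (hpow m hm) hbn.symm hk).ne_one hinj
end

section
/- A proper amalgamated free product G = A *_C B is virtually solvable if and only if C is a virtually solvable normal subgroup of G and G/C ≅ D∞. -/
/-!
Write `G = A *_C B`.

Suppose first that `G` is virtually solvable. If `C` had at least three cosets in one factor, say
with `a`, `a'`, `a⁻¹ a'` in `A \ C`, pick `b` in `B \ C`. In the action of `G` on normal forms, let
`S` be the set of words beginning in `A`; then `a b a'⁻¹` and its conjugate by `b` play ping-pong on
the four sets `a Sᶜ`, `a' Sᶜ`, `b a Sᶜ`, `b a' Sᶜ`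
(`not_virtuallySolvable_of_three_cosets`). Their powers do as well, so every subgroup of finite index
contains a free group of rank two, which is not solvable because it maps onto the symmetric group on
five letters. Hence `C` has index two in both factors, so it is normal in `G`
(`normal_range_base`), and `G / C` is the free product of two groups of order two, that is `D∞`
(`exists_dihedral_of_index_two`).

Conversely, an extension of a solvable group by a virtually solvable group `N` is virtually solvable
(`virtuallySolvable_of_ker`): `N` has a characteristic solvable subgroup `R` of finite index
(`VirtuallySolvable.exists_characteristic`), and the centralizer of `N / R` has finite index and is
solvable.
-/

/-- A group is virtually solvable if it has a solvable subgroup of finite index. -/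
def VirtuallySolvable (G : Type*) [Group G] : Prop :=
  ∃ H : Subgroup G, H.FiniteIndex ∧ IsSolvable H

/-! ### Virtually solvable groups -/

/-- Virtual solvability passes to subgroups. -/
lemma VirtuallySolvable.subgroup {G : Type*} [Group G] (h : VirtuallySolvable G)
    (K : Subgroup G) : VirtuallySolvable K := by
  obtain ⟨H, hfin, hsol⟩ := h
  replace hsol : Group.IsSolvable H := hsol
  refine ⟨H.subgroupOf K, inferInstance, ?_⟩
  exact Group.isSolvable_of_isSolvable_injective (G' := H)
    (f := (K.subtype.comp (H.subgroupOf K).subtype).codRestrict H fun x => x.2)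
    fun x y hxy => Subtype.ext (Subtype.ext (congrArg (fun z : H => (z : G)) hxy))

lemma isSolvable_sup_of_normal {G : Type*} [Group G] (R S : Subgroup G) [R.Normal]
    (hR : Group.IsSolvable R) (hS : Group.IsSolvable S) :
    Group.IsSolvable (R ⊔ S : Subgroup G) := by
  have hmap : ((R ⊔ S).map (QuotientGroup.mk' R)) = S.map (QuotientGroup.mk' R) := by
    rw [Subgroup.map_sup]
    simp
  have : Group.IsSolvable (S.map (QuotientGroup.mk' R)) :=
    Group.isSolvable_of_surjective ((QuotientGroup.mk' R).subgroupMap_surjective S)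
  rw [← hmap] at this
  refine Group.isSolvable_of_ker_le_range
    (Subgroup.inclusion (le_sup_left : R ≤ R ⊔ S))
    ((QuotientGroup.mk' R).subgroupMap (R ⊔ S)) ?_
  intro x hx
  have hx' : (QuotientGroup.mk' R) (x : G) = 1 := congrArg Subtype.val hx
  have : (x : G) ∈ R := by simpa using hx'
  exact ⟨⟨x, this⟩, Subtype.ext rfl⟩

/-- Among the normal solvable subgroups of finite index, one of minimal index contains all
its images under automorphisms, since a join of two normal solvable subgroups is solvable. -/
lemma VirtuallySolvable.exists_characteristic {G : Type*} [Group G] (h : VirtuallySolvable G) :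
    ∃ R : Subgroup G, R.Characteristic ∧ R.FiniteIndex ∧ Group.IsSolvable R := by
  obtain ⟨H, hfin, hsol⟩ := h
  replace hsol : Group.IsSolvable H := hsol
  let P : ℕ → Prop := fun n =>
    ∃ R : Subgroup G, R.Normal ∧ R.FiniteIndex ∧ Group.IsSolvable R ∧ R.index = n
  have hP : ∃ n, P n := by
    refine ⟨_, H.normalCore, inferInstance, inferInstance, ?_, rfl⟩
    exact Group.isSolvable_of_isSolvable_injective
      (Subgroup.inclusion_injective H.normalCore_le)
  classical
  obtain ⟨R, hRn, hRf, hRs, hRi⟩ := Nat.find_spec hP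
  refine ⟨R, Subgroup.characteristic_iff_map_le.2 fun ϕ => ?_, hRf, hRs⟩
  have hn : (R.map ϕ.toMonoidHom).Normal := hRn.map _ ϕ.surjective
  have hs : Group.IsSolvable (R.map ϕ.toMonoidHom) :=
    Group.isSolvable_of_surjective (ϕ.toMonoidHom.subgroupMap_surjective R)
  by_contra hle
  have hlt : R < R ⊔ R.map ϕ.toMonoidHom := left_lt_sup.2 hle
  have hi := Subgroup.index_strictAnti hlt
  rw [hRi] at hi
  exact Nat.find_min hP hi ⟨_, inferInstance, Subgroup.finiteIndex_of_le hlt.le,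
    isSolvable_sup_of_normal _ _ hRs hs, rfl⟩

/-- An extension of a solvable group by a virtually solvable group is virtually solvable.
If `R` is a solvable characteristic subgroup of finite index in the kernel `N`, then the elements
of `G` acting trivially on the finite group `N ⧸ R` form a finite-index subgroup, and this subgroup
is solvable: modulo `R` its intersection with `N` is abelian. -/
lemma virtuallySolvable_of_ker {G D : Type*} [Group G] [Group D] (f : G →* D)
    (hD : Group.IsSolvable D) (hN : VirtuallySolvable f.ker) : VirtuallySolvable G := by
  let N : Subgroup G := f.ker
  have hNn : N.Normal := f.normal_ker
  obtain ⟨R, hRc, hRf, hRs⟩ : ∃ R : Subgroup N,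
      R.Characteristic ∧ R.FiniteIndex ∧ Group.IsSolvable R := hN.exists_characteristic
  let M : Subgroup G := R.map N.subtype
  have hMn : M.Normal := inferInstance
  have hMs : Group.IsSolvable M :=
    Group.isSolvable_of_surjective (N.subtype.subgroupMap_surjective R)
  have hMN : M ≤ N := Subgroup.map_subtype_le R
  let q := QuotientGroup.mk' M
  let F : Subgroup (G ⧸ M) := N.map q
  have hFn : F.Normal := Subgroup.Normal.map inferInstance q (QuotientGroup.mk'_surjective M)
  have hFfin : Finite F := by
    apply Nat.finite_of_card_ne_zero
    rw [← Subgroup.relIndex_ker, QuotientGroup.ker_mk']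
    have : M.subgroupOf N = R := Subgroup.comap_map_eq_self_of_injective N.subtype_injective R
    rw [Subgroup.relIndex, this]
    exact hRf.index_ne_zero
  have hAut : Finite (MulAut F) :=
    Finite.of_injective (fun e : MulAut F => (e : F → F)) DFunLike.coe_injective
  let act : G →* MulAut F := (MulAut.conjNormal (H := F)).comp q
  have hact : ∀ k ∈ act.ker, ∀ n ∈ N, q k * q n = q n * q k := by
    intro k hk n hn
    have h1 : act k = 1 := hk
    have h2 := congrArg (fun e : MulAut F => ((e ⟨q n, n, hn, rfl⟩ : F) : G ⧸ M)) h1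
    have h3 : q k * q n * (q k)⁻¹ = q n := by
      simpa [act, MulAut.conjNormal_apply] using h2
    exact mul_inv_eq_iff_eq_mul.1 h3
  have hML : M ≤ N ⊓ act.ker := by
    refine le_inf hMN fun m hm => ?_
    have : q m = 1 := (QuotientGroup.eq_one_iff m).2 hm
    rw [MonoidHom.mem_ker, MonoidHom.comp_apply, this, map_one]
  have hL : Group.IsSolvable (N ⊓ act.ker : Subgroup G) := by
    let g := (q.comp (N ⊓ act.ker : Subgroup G).subtype).rangeRestrict
    have hcomm : Group.IsSolvable (q.comp (N ⊓ act.ker : Subgroup G).subtype).range := by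
      refine Group.isSolvable_of_comm ?_
      rintro ⟨_, x, rfl⟩ ⟨_, y, rfl⟩
      exact Subtype.ext (hact x x.2.2 y y.2.1)
    refine Group.isSolvable_of_ker_le_range (Subgroup.inclusion hML) g fun x hx => ?_
    have hx' : q (x : G) = 1 := congrArg Subtype.val hx
    exact ⟨⟨x, (QuotientGroup.eq_one_iff _).1 hx'⟩, Subtype.ext rfl⟩
  refine ⟨act.ker, inferInstance, ?_⟩
  refine Group.isSolvable_of_ker_le_range
    (Subgroup.inclusion (inf_le_right : N ⊓ act.ker ≤ act.ker)) (f.comp act.ker.subtype) ?_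
  intro x hx
  exact ⟨⟨x, hx, x.2⟩, Subtype.ext rfl⟩

lemma isSolvable_dihedralGroup_zero : Group.IsSolvable (DihedralGroup 0) := by
  let rot : Multiplicative (ZMod 0) →* DihedralGroup 0 :=
    MonoidHom.mk' (fun k => DihedralGroup.r k.toAdd) fun a b => by simp
  let sgn : DihedralGroup 0 →* Multiplicative (ZMod 2) :=
    MonoidHom.mk' (fun x => match x with
      | .r _ => 1
      | .sr _ => Multiplicative.ofAdd 1) (by
        rintro (i | i) (j | j) <;> simp
        decide)
  refine Group.isSolvable_of_ker_le_range rot sgn ?_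
  rintro (i | i) hx
  · exact ⟨Multiplicative.ofAdd i, rfl⟩
  · exact absurd (show (Multiplicative.ofAdd 1 : Multiplicative (ZMod 2)) = 1 from hx) (by decide)

/-! ### Ping-pong -/

/-- A transposition and a five-cycle generate the symmetric group on five letters, which is
therefore a non-solvable quotient. -/
lemma not_isSolvable_freeGroup {ι : Type*} [Nontrivial ι] : ¬ Group.IsSolvable (FreeGroup ι) := by
  intro h
  classical
  obtain ⟨i, j, hij⟩ := exists_pair_ne ι
  let p : FreeGroup ι →* Equiv.Perm (Fin 5) :=
    FreeGroup.lift fun k => if k = i then finRotate 5 else Equiv.swap 0 1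
  have hp : Function.Surjective p := by
    rw [← MonoidHom.range_eq_top, eq_top_iff,
      ← Equiv.Perm.closure_prime_cycle_swap (α := Fin 5) (σ := finRotate 5) (τ := Equiv.swap 0 1)
        (by simpa using Nat.prime_five) isCycle_finRotate support_finRotate
        ⟨0, 1, by decide, rfl⟩, Subgroup.closure_le]
    rintro _ (rfl | rfl)
    · exact ⟨FreeGroup.of i, by simp [p]⟩
    · exact ⟨FreeGroup.of j, by simp [p, hij.symm]⟩
  exact Equiv.Perm.not_isSolvable_fin_5 (Group.isSolvable_of_surjective hp)

lemma pow_smul_mem_of_pingPong {G α : Type*} [Group G] [MulAction G α] {g : G} {X Y : Set α}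
    (hXY : Disjoint X Y) (h : ∀ w ∉ Y, g • w ∈ X) {n : ℕ} (hn : 0 < n) :
    ∀ w ∉ Y, g ^ n • w ∈ X := by
  induction n, hn using Nat.le_induction with
  | base => simpa using h
  | succ n _ ih =>
    intro w hw
    rw [pow_succ', mul_smul]
    exact h _ (Set.disjoint_left.1 hXY (ih w hw))

/-- A ping-pong pair generates a free group. Positive powers of the pair are again a ping-pong
pair with the same sets, so every finite-index subgroup contains a free group of rank two. -/
lemma not_virtuallySolvable_of_pingPong {G : Type*} {α : Type*} [Group G] [MulAction G α]
    (g : Bool → G) (X Y : Bool → Set α) (hne : ∀ i, (X i).Nonempty)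
    (hXX : Disjoint (X false) (X true)) (hYY : Disjoint (Y false) (Y true))
    (hXY : ∀ i j, Disjoint (X i) (Y j))
    (hX : ∀ i, ∀ w ∉ Y i, g i • w ∈ X i) (hY : ∀ i, ∀ w ∉ X i, (g i)⁻¹ • w ∈ Y i) :
    ¬ VirtuallySolvable G := by
  rintro ⟨H, hfin, hsol⟩
  replace hsol : Group.IsSolvable H := hsol
  choose n hn _ hmem using fun i => Subgroup.exists_pow_mem_of_index_ne_zero
    hfin.index_ne_zero (g i)
  have hpair : ∀ Z : Bool → Set α, Disjoint (Z false) (Z true) →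
      Pairwise (Function.onFun Disjoint fun i : ULift Bool => Z i.down) := by
    rintro Z hZ ⟨_ | _⟩ ⟨_ | _⟩ h
    · exact absurd rfl h
    · exact hZ
    · exact hZ.symm
    · exact absurd rfl h
  have hinj := FreeGroup.injective_lift_of_ping_pong
    (fun i : ULift Bool => (⟨g i.down ^ n i.down, hmem i.down⟩ : H))
    (fun i => X i.down) (fun i => Y i.down) (fun i => hne i.down)
    (hpair X hXX) (hpair Y hYY) (fun i j => hXY _ _)
    (by
      rintro i _ ⟨w, hw, rfl⟩
      exact pow_smul_mem_of_pingPong (hXY _ _) (hX i.down) (hn i.down) w hw)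
    (by
      rintro i _ ⟨w, hw, rfl⟩
      have := pow_smul_mem_of_pingPong (hXY _ _).symm (hY i.down) (hn i.down) w hw
      rwa [inv_pow] at this)
  exact not_isSolvable_freeGroup (Group.isSolvable_of_isSolvable_injective hinj)

/-- The configuration of an amalgam acting on its normal forms: `S` and `S'` stand for the words
beginning in the two factors `A` and `B`, and `K` for the amalgamated subgroup. If `K` has at least
three cosets in `A` and at least two in `B`, then `g = a b a'⁻¹` and its conjugate `b g b⁻¹` play
ping-pong on the sets `a Sᶜ`, `a' Sᶜ`, `b a Sᶜ`, `b a' Sᶜ`. -/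
lemma not_virtuallySolvable_of_three_cosets {G : Type*} {α : Type*} [Group G] [MulAction G α]
    (A B K : Subgroup G) (S S' : Set α) (hSS' : Disjoint S S') (hS : ∃ w, w ∉ S)
    (hA : ∀ x ∈ A, x ∉ K → ∀ w ∉ S, x • w ∈ S)
    (hB : ∀ x ∈ B, x ∉ K → ∀ w ∉ S', x • w ∈ S')
    {a a' b : G} (ha : a ∈ A) (ha' : a' ∈ A) (hb : b ∈ B)
    (haK : a ∉ K) (haK' : a' ∉ K) (haa' : a⁻¹ * a' ∉ K) (hbK : b ∉ K) :
    ¬ VirtuallySolvable G := by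
  have hbS : ∀ w ∈ S, b • w ∉ S := fun w hw h =>
    Set.disjoint_left.1 hSS' h (hB b hb hbK w (Set.disjoint_left.1 hSS' hw))
  have hbS' : ∀ w ∈ S, b⁻¹ • w ∉ S := fun w hw h =>
    Set.disjoint_left.1 hSS' h (hB _ (B.inv_mem hb) (mt inv_mem_iff.1 hbK) w
      (Set.disjoint_left.1 hSS' hw))
  -- membership in the translate `x Sᶜ`
  let T : G → Set α := fun x => {w | x⁻¹ • w ∉ S}
  have hstep : ∀ x y z : G, (∀ w ∈ S, y • w ∉ S) → ∀ w ∉ T z, (x * y * z⁻¹) • w ∈ T x := by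
    intro x y z hy w hw
    have hw' : z⁻¹ • w ∈ S := not_not.1 hw
    have : x⁻¹ • (x * y * z⁻¹) • w = y • z⁻¹ • w := by simp only [smul_smul]; group
    change x⁻¹ • (x * y * z⁻¹) • w ∉ S
    rw [this]
    exact hy _ hw'
  have hdisj : ∀ x y : G, x⁻¹ * y ∈ A → x⁻¹ * y ∉ K → Disjoint (T x) (T y) := by
    intro x y hxA hxK
    refine Set.disjoint_left.2 fun w hx hy => hx ?_
    have := hA _ hxA hxK _ hy
    rwa [smul_smul, mul_assoc, mul_inv_cancel, mul_one] at this
  have hTS : ∀ x ∈ A, x ∉ K → T x ⊆ S := by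
    intro x hx hxK w hw
    simpa using hA x hx hxK _ hw
  have hTb : ∀ x ∈ A, x ∉ K → T (b * x) ⊆ S' := by
    intro x hx hxK w hw
    have h1 : b⁻¹ • w ∈ S := hTS x hx hxK (by simpa [T, mul_smul] using hw)
    simpa using hB b hb hbK _ (Set.disjoint_left.1 hSS' h1)
  have hcross : ∀ x ∈ A, x ∉ K → ∀ y ∈ A, y ∉ K → Disjoint (T x) (T (b * y)) :=
    fun x hx hxK y hy hyK => hSS'.mono (hTS x hx hxK) (hTb y hy hyK)
  have hne : ∀ x, (T x).Nonempty := fun x => by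
    obtain ⟨w, hw⟩ := hS
    exact ⟨x • w, by simpa [T] using hw⟩
  have haA : a⁻¹ * a' ∈ A := A.mul_mem (A.inv_mem ha) ha'
  refine not_virtuallySolvable_of_pingPong (α := α)
    (fun i => bif i then b * a * b * (b * a')⁻¹ else a * b * a'⁻¹)
    (fun i => bif i then T (b * a) else T a) (fun i => bif i then T (b * a') else T a')
    (by rintro (_ | _) <;> exact hne _) (hcross a ha haK a ha haK)
    (hcross a' ha' haK' a' ha' haK') ?_ ?_ ?_
  · rintro (_ | _) (_ | _)
    · exact hdisj a a' haA haa'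
    · exact hcross a ha haK a' ha' haK'
    · exact (hcross a' ha' haK' a ha haK).symm
    · refine hdisj (b * a) (b * a') ?_ ?_
      · simpa [mul_assoc] using haA
      · simpa [mul_assoc] using haa'
  · rintro (_ | _)
    · exact hstep a b a' hbS
    · exact hstep (b * a) b (b * a') hbS
  · rintro (_ | _)
    · have := hstep a' b⁻¹ a hbS'
      simpa [mul_assoc] using this
    · have := hstep (b * a') b⁻¹ (b * a) hbS'
      simpa [mul_assoc] using this

/-! ### The amalgamated product -/

open Monoid in
/-- In a virtually solvable proper amalgam the amalgamated subgroup has index at most two in each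
factor. The group acts on normal forms, and multiplying by an element of a factor outside the
amalgamated subgroup puts a letter of that factor in front of any word not starting with one. -/
lemma inv_mul_mem_range_of_virtuallySolvable
    {C : Type*} [Group C] {Gf : Bool → Type*} [∀ b, Group (Gf b)] (φ : ∀ b, C →* Gf b)
    (hinj : ∀ b, Function.Injective (φ b)) (hproper : ∀ b, (φ b).range ≠ ⊤)
    (hG : VirtuallySolvable (PushoutI φ)) (i : Bool) (a a' : Gf i)
    (ha : a ∉ (φ i).range) (ha' : a' ∉ (φ i).range) : a⁻¹ * a' ∈ (φ i).range := by
  classical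
  by_contra haa'
  obtain ⟨d⟩ := PushoutI.NormalWord.transversal_nonempty φ hinj
  obtain ⟨b, hb⟩ : ∃ b, b ∉ (φ !i).range := by
    by_contra! h
    exact hproper _ (eq_top_iff.2 fun x _ => h x)
  have hof : ∀ j (x : Gf j), PushoutI.of (φ := φ) j x ∈ (PushoutI.base φ).range →
      x ∈ (φ j).range := by
    rintro j x ⟨c, hc⟩
    rw [← PushoutI.of_apply_eq_base φ j] at hc
    exact ⟨c, PushoutI.of_injective hinj j hc⟩
  let S : Bool → Set (PushoutI.NormalWord d) := fun j => {w | w.fstIdx = some j}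
  have hstep : ∀ j, ∀ x ∈ (PushoutI.of (φ := φ) j).range, x ∉ (PushoutI.base φ).range →
      ∀ w ∉ S j, x • w ∈ S j := by
    rintro j _ ⟨x, rfl⟩ hx w hw
    have hx' : x ∉ (φ j).range := fun ⟨c, hc⟩ =>
      hx ⟨c, by rw [← PushoutI.of_apply_eq_base φ j, hc]⟩
    rw [← PushoutI.NormalWord.cons_eq_smul x w hw hx']
    simp [S, PushoutI.NormalWord.cons]
  refine not_virtuallySolvable_of_three_cosets (PushoutI.of (φ := φ) i).range
    (PushoutI.of (φ := φ) !i).range (PushoutI.base φ).range (S i) (S !i) ?_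
    ⟨PushoutI.NormalWord.empty, by
      simp [S, PushoutI.NormalWord.empty, CoprodI.Word.fstIdx, CoprodI.Word.empty]⟩
    (hstep i) (hstep _) ⟨a, rfl⟩ ⟨a', rfl⟩ ⟨b, rfl⟩ (mt (hof _ _) ha) (mt (hof _ _) ha') ?_
    (mt (hof _ _) hb) hG
  · refine Set.disjoint_left.2 fun w h1 h2 => ?_
    have : some i = some !i := h1.symm.trans h2
    simp at this
  · rw [← map_inv, ← map_mul]
    exact mt (hof _ _) haa'

/-- The homomorphism from the infinite dihedral group determined by two elements of order dividing
two: it sends `sr 0` to `x` and `sr 1` to `y`. -/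
def dihedralLift {Q : Type*} [Group Q] (x y : Q) (hx : x * x = 1) (hy : y * y = 1) :
    DihedralGroup 0 →* Q :=
  -- `ZMod 0` is `ℤ`, so indices of rotations and reflections are integer exponents
  MonoidHom.mk' (fun g => match g with
    | .r n => (x * y) ^ (show ℤ from n)
    | .sr n => x * (x * y) ^ (show ℤ from n)) (by
      have hx' : x⁻¹ = x := inv_eq_of_mul_eq_one_left hx
      have hy' : y⁻¹ = y := inv_eq_of_mul_eq_one_left hy
      have hconj : ∀ n : ℤ, (x * y) ^ n * x = x * (x * y) ^ (-n) := by
        intro n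
        have h1 : x * (x * y) * x⁻¹ = (x * y)⁻¹ := by
          rw [mul_inv_rev, hx', hy', ← mul_assoc, hx, one_mul]
        have h2 := conj_zpow (i := -n) (a := x) (b := x * y)
        rw [h1, inv_zpow', neg_neg] at h2
        rw [h2, inv_mul_cancel_right]
      rintro (i | i) (j | j)
      · exact zpow_add (x * y) (show ℤ from i) (show ℤ from j)
      · change x * (x * y) ^ ((show ℤ from j) - (show ℤ from i)) =
          (x * y) ^ (show ℤ from i) * (x * (x * y) ^ (show ℤ from j))
        rw [← mul_assoc, hconj, mul_assoc, ← zpow_add, sub_eq_neg_add]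
      · change x * (x * y) ^ ((show ℤ from i) + (show ℤ from j)) =
          x * (x * y) ^ (show ℤ from i) * (x * y) ^ (show ℤ from j)
        rw [mul_assoc, ← zpow_add]
      · change (x * y) ^ ((show ℤ from j) - (show ℤ from i)) =
          x * (x * y) ^ (show ℤ from i) * (x * (x * y) ^ (show ℤ from j))
        rw [mul_assoc, ← mul_assoc _ x, hconj, mul_assoc, ← mul_assoc, hx, one_mul, ← zpow_add,
          sub_eq_neg_add])

lemma dihedralLift_sr_zero {Q : Type*} [Group Q] (x y : Q) (hx : x * x = 1) (hy : y * y = 1) :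
    dihedralLift x y hx hy (.sr 0) = x := by
  change x * (x * y) ^ (0 : ℤ) = x
  simp

lemma dihedralLift_sr_one {Q : Type*} [Group Q] (x y : Q) (hx : x * x = 1) (hy : y * y = 1) :
    dihedralLift x y hx hy (.sr 1) = y := by
  change x * (x * y) ^ (1 : ℤ) = y
  rw [zpow_one, ← mul_assoc, hx, one_mul]

open Classical in
/-- For a subgroup `K` of index at most two and an involution `t`, the homomorphism with value
`1` on `K` and `t` off `K`. -/
noncomputable def indexTwoHom {A D : Type*} [Group A] [Group D] (K : Subgroup A)
    (hK : ∀ a a', a ∉ K → a' ∉ K → a⁻¹ * a' ∈ K) (t : D) (ht : t * t = 1) : A →* D :=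
  MonoidHom.mk' (fun a => if a ∈ K then 1 else t) (by
    intro a b
    by_cases ha : a ∈ K
    · simp [ha, Subgroup.mul_mem_cancel_left]
    · by_cases hb : b ∈ K
      · simp [ha, hb, Subgroup.mul_mem_cancel_right]
      · have : a * b ∈ K := by simpa using hK a⁻¹ b (mt inv_mem_iff.1 ha) hb
        simp [ha, hb, this, ht])

lemma indexTwoHom_of_mem {A D : Type*} [Group A] [Group D] {K : Subgroup A}
    {hK : ∀ a a', a ∉ K → a' ∉ K → a⁻¹ * a' ∈ K} {t : D} {ht : t * t = 1} {a : A} (ha : a ∈ K) :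
    indexTwoHom K hK t ht a = 1 := by
  simp [indexTwoHom, ha]

lemma indexTwoHom_of_notMem {A D : Type*} [Group A] [Group D] {K : Subgroup A}
    {hK : ∀ a a', a ∉ K → a' ∉ K → a⁻¹ * a' ∈ K} {t : D} {ht : t * t = 1} {a : A} (ha : a ∉ K) :
    indexTwoHom K hK t ht a = t := by
  simp [indexTwoHom, ha]

open Monoid in
/-- If the amalgamated subgroup has index at most two in both factors, it is normal in the amalgam. -/
lemma normal_range_base
    {C : Type*} [Group C] {Gf : Bool → Type*} [∀ b, Group (Gf b)] (φ : ∀ b, C →* Gf b)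
    (h2 : ∀ i (a a' : Gf i), a ∉ (φ i).range → a' ∉ (φ i).range → a⁻¹ * a' ∈ (φ i).range) :
    (PushoutI.base φ).range.Normal := by
  refine ⟨fun n hn g => ?_⟩
  induction g using PushoutI.induction_on generalizing n with
  | of i x =>
    obtain ⟨c, rfl⟩ := hn
    have key : x * φ i c * x⁻¹ ∈ (φ i).range := by
      by_cases hx : x ∈ (φ i).range
      · exact mul_mem (mul_mem hx ⟨c, rfl⟩) (inv_mem hx)
      · have h1 : (x * φ i c)⁻¹ ∉ (φ i).range := by
          rw [inv_mem_iff, Subgroup.mul_mem_cancel_right _ (MonoidHom.mem_range.2 ⟨c, rfl⟩)]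
          exact hx
        simpa using h2 i _ _ h1 (mt inv_mem_iff.1 hx)
    obtain ⟨c', hc'⟩ := key
    refine ⟨c', ?_⟩
    rw [← PushoutI.of_apply_eq_base φ i, ← PushoutI.of_apply_eq_base φ i, hc']
    simp
  | base c => exact mul_mem (mul_mem ⟨c, rfl⟩ hn) (inv_mem ⟨c, rfl⟩)
  | mul x y hx hy =>
    have := hx _ (hy n hn)
    simpa [mul_assoc] using this

open Monoid in
/-- If the amalgamated subgroup has index two in both factors, the amalgam maps onto `D∞` by
sending the two factors to the subgroups generated by the reflections `sr 0` and `sr 1`. These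
generate `D∞`, and the homomorphism from `D∞` back to the quotient by the amalgamated subgroup
determines the kernel. -/
lemma exists_dihedral_of_index_two
    {C : Type*} [Group C] {Gf : Bool → Type*} [∀ b, Group (Gf b)] (φ : ∀ b, C →* Gf b)
    (hproper : ∀ b, (φ b).range ≠ ⊤)
    (h2 : ∀ i (a a' : Gf i), a ∉ (φ i).range → a' ∉ (φ i).range → a⁻¹ * a' ∈ (φ i).range) :
    ∃ f : PushoutI φ →* DihedralGroup 0,
      Function.Surjective f ∧ f.ker = (PushoutI.base φ).range := by
  have hN := normal_range_base φ h2
  have hex : ∀ i, ∃ b, b ∉ (φ i).range := by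
    intro i
    by_contra! h
    exact hproper _ (eq_top_iff.2 fun x _ => h x)
  choose s hs using hex
  let t : Bool → DihedralGroup 0 := fun i => bif i then .sr 1 else .sr 0
  have ht : ∀ i, t i * t i = 1 := by rintro (_ | _) <;> exact DihedralGroup.sr_mul_self _
  let f : PushoutI φ →* DihedralGroup 0 :=
    PushoutI.lift (fun i => indexTwoHom (φ i).range (h2 i) (t i) (ht i)) 1 (by
      intro i
      ext c
      exact indexTwoHom_of_mem (hK := h2 i) (ht := ht i) (MonoidHom.mem_range.2 ⟨c, rfl⟩))
  have hfs : ∀ i, f (PushoutI.of i (s i)) = t i := fun i => by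
    rw [PushoutI.lift_of, indexTwoHom_of_notMem (hs i)]
  let q := QuotientGroup.mk' (PushoutI.base φ).range
  have hq : ∀ i, ∀ x ∈ (φ i).range, q (PushoutI.of i x) = 1 := by
    rintro i _ ⟨c, rfl⟩
    exact (QuotientGroup.eq_one_iff _).2 ⟨c, (PushoutI.of_apply_eq_base φ i c).symm⟩
  have hsq : ∀ i, q (PushoutI.of i (s i)) * q (PushoutI.of i (s i)) = 1 := by
    intro i
    rw [← map_mul, ← map_mul]
    refine hq i _ ?_
    simpa using h2 i _ _ (mt inv_mem_iff.1 (hs i)) (hs i)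
  let ψ := dihedralLift _ _ (hsq false) (hsq true)
  have hψt : ∀ i, ψ (t i) = q (PushoutI.of i (s i)) := by
    rintro (_ | _)
    · exact dihedralLift_sr_zero _ _ _ _
    · exact dihedralLift_sr_one _ _ _ _
  have hψ : ψ.comp f = q := by
    refine PushoutI.hom_ext_nonempty fun i => MonoidHom.ext fun x => ?_
    change ψ (f (PushoutI.of i x)) = q (PushoutI.of i x)
    rw [PushoutI.lift_of]
    by_cases hx : x ∈ (φ i).range
    · rw [indexTwoHom_of_mem hx, map_one, hq i x hx]
    · rw [indexTwoHom_of_notMem hx, hψt]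
      have := hq i _ (h2 i _ _ (hs i) hx)
      rw [map_mul, map_mul, map_inv, map_inv] at this
      exact inv_mul_eq_one.1 this
  refine ⟨f, ?_, le_antisymm ?_ ?_⟩
  · rw [← MonoidHom.range_eq_top, eq_top_iff]
    have h0 : (.sr 0 : DihedralGroup 0) ∈ f.range := ⟨_, hfs false⟩
    have h1 : (.sr 1 : DihedralGroup 0) ∈ f.range := ⟨_, hfs true⟩
    have hr1 : (.r 1 : DihedralGroup 0) ∈ f.range := by
      simpa using mul_mem h0 h1
    have hr : ∀ n : ℤ, (.r n : DihedralGroup 0) ∈ f.range := fun n => by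
      have := zpow_mem hr1 n
      rwa [DihedralGroup.r_one_zpow] at this
    rintro (n | n) -
    · exact hr n
    · have := mul_mem h0 (hr n)
      rw [DihedralGroup.sr_mul_r, zero_add] at this
      exact this
  · intro x hx
    have : q x = 1 := by
      rw [← hψ, MonoidHom.comp_apply, MonoidHom.mem_ker.1 hx, map_one]
    exact (QuotientGroup.eq_one_iff x).1 this
  · rintro _ ⟨c, rfl⟩
    exact PushoutI.lift_base _ _ _ c

/-- A proper amalgamated free product `G = A *_C B` (realized as the pushout of
injective maps `φ b : C →* Gf b`, `b : Bool`, with proper images) is virtually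
solvable iff the image of `C` in `G` is a virtually solvable normal subgroup
with quotient isomorphic to the infinite dihedral group `D∞`. -/
theorem proper_amalgam_virtuallySolvable_iff
    {C : Type*} [Group C] {Gf : Bool → Type*} [∀ b, Group (Gf b)]
    (φ : ∀ b, C →* Gf b)
    (hinj : ∀ b, Function.Injective (φ b))
    (hproper : ∀ b, (φ b).range ≠ ⊤) :
    VirtuallySolvable (Monoid.PushoutI φ) ↔
      ((Monoid.PushoutI.base φ).range.Normal ∧
        VirtuallySolvable (Monoid.PushoutI.base φ).range ∧
        ∃ f : Monoid.PushoutI φ →* DihedralGroup 0,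
          Function.Surjective f ∧ f.ker = (Monoid.PushoutI.base φ).range) := by
  constructor
  · intro hG
    have h2 := inv_mul_mem_range_of_virtuallySolvable φ hinj hproper hG
    exact ⟨normal_range_base φ h2, hG.subgroup _, exists_dihedral_of_index_two φ hproper h2⟩
  · rintro ⟨-, hC, f, -, hf⟩
    rw [← hf] at hC
    exact virtuallySolvable_of_ker f isSolvable_dihedralGroup_zero hC
end
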